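/- arXiv:1004.4980 — 3 statements merged into one kernel-verified Lean document; each statement's English description precedes it below -/
import Mathlib

section
/- Let G be a bipartite graph and K a field. The analytic spread of the cover ideal equals the graphical dimension: ℓ(J(G)) = gdim(G), where ℓ(J(G)) is the Krull dimension of the ordinary fiber cone R(J(G))/mR(J(G)) of J(G). -/
set_option synthInstance.maxHeartbeats 1000000
set_option maxHeartbeats 1000000

open MvPolynomial

/-- The cover ideal `J(G) = ⋂_{{i,j} ∈ E} (x_i, x_j)`. -/
noncomputable def coverIdeal (K : Type*) [Field K] {n : ℕ} (G : SimpleGraph (Fin n)) :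
    Ideal (MvPolynomial (Fin n) K) :=
  ⨅ e ∈ G.edgeSet, Ideal.span (MvPolynomial.X '' {v : Fin n | v ∈ e})

/-- The ideal `m·R(J(G))` of the ordinary Rees algebra `R(J(G)) = ⊕_k J(G)^k t^k`,
generated by the variables `x_i = x_i t^0`. -/
noncomputable def reesIrrelevantIdeal (K : Type*) [Field K] {n : ℕ}
    (G : SimpleGraph (Fin n)) : Ideal (reesAlgebra (coverIdeal K G)) :=
  Ideal.span {a : reesAlgebra (coverIdeal K G) |
    ∃ i : Fin n, (a : Polynomial (MvPolynomial (Fin n) K)) = Polynomial.C (MvPolynomial.X i)}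

/-- The ordinary fiber cone `R(J(G)) / m·R(J(G))` of the cover ideal; its Krull dimension is
the analytic spread `ℓ(J(G))`. -/
noncomputable def ordinaryFiberCone (K : Type*) [Field K] {n : ℕ}
    (G : SimpleGraph (Fin n)) : Type _ :=
  reesAlgebra (coverIdeal K G) ⧸ reesIrrelevantIdeal K G

noncomputable instance (K : Type*) [Field K] {n : ℕ} (G : SimpleGraph (Fin n)) :
    CommRing (ordinaryFiberCone K G) :=
  Ideal.Quotient.commRing (reesIrrelevantIdeal K G)

/-- A free parameter pair. -/
def IsFreeParameterPair {n r : ℕ} (G : SimpleGraph (Fin n)) (a b : Fin r → Fin n) : Prop :=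
  Function.Injective a ∧ Function.Injective b ∧
  (∀ i j : Fin r, ¬ G.Adj (a i) (a j)) ∧
  (∀ i j : Fin r, a i ≠ b j) ∧
  (∀ i : Fin r, G.Adj (a i) (b i)) ∧
  (∀ i j : Fin r, G.Adj (a i) (b j) → i ≤ j)

/-- `G` has a free parameter set of cardinality `r`. -/
def HasFreeParameterSet {n : ℕ} (G : SimpleGraph (Fin n)) (r : ℕ) : Prop :=
  ∃ a b : Fin r → Fin n, IsFreeParameterPair G a b

/-- The graphical dimension. -/
noncomputable def gdim {n : ℕ} (G : SimpleGraph (Fin n)) : ℕ :=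
  sSup {r : ℕ | HasFreeParameterSet G r} + 1

/-- An integral ring homomorphism does not raise the Krull dimension. -/
theorem ringKrullDim_le_of_ringHom_isIntegral {R S : Type*} [CommRing R] [CommRing S]
    (f : R →+* S) (hf : f.IsIntegral) : ringKrullDim S ≤ ringKrullDim R := by
  algebraize [f]
  refine Order.krullDim_le_of_strictMono (PrimeSpectrum.comap f) fun P Q hPQ => ?_
  exact Ideal.IsIntegral.comap_lt_comap (R := R) (I := P.asIdeal) (J := Q.asIdeal) hPQ

/-- Chains of primes lift along an injective integral ring homomorphism. -/
theorem ringKrullDim_le_of_ringHom_isIntegral_of_injective {R S : Type*} [CommRing R] [CommRing S]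
    (f : R →+* S) (hf : f.IsIntegral) (hinj : Function.Injective f) :
    ringKrullDim R ≤ ringKrullDim S := by
  algebraize [f]
  have lift : ∀ (l : ℕ) (p : LTSeries (PrimeSpectrum R)), p.length = l →
      ∃ q : LTSeries (PrimeSpectrum S), q.length = l ∧ PrimeSpectrum.comap f q.last = p.last := by
    intro l
    induction l with
    | zero =>
      intro p _
      obtain ⟨Q, -, hQ, hQP⟩ := Ideal.exists_ideal_over_prime_of_isIntegral (S := S)
        p.last.asIdeal ⊥ (by
          intro x hx
          have h0 : f x = 0 := hx
          rw [(map_eq_zero_iff f hinj).1 h0]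
          exact zero_mem _)
      exact ⟨RelSeries.singleton _ ⟨Q, hQ⟩, rfl, PrimeSpectrum.ext hQP⟩
    | succ l ih =>
      intro p hp
      obtain ⟨q, hq, hqp⟩ := ih p.eraseLast (by simp [hp])
      have hlt : p.eraseLast.last < p.last := p.eraseLast_last_rel_last (by omega)
      obtain ⟨Q, hqQ, hQ, hQP⟩ := Ideal.exists_ideal_over_prime_of_isIntegral (S := S)
        p.last.asIdeal q.last.asIdeal (by
          have : PrimeSpectrum.comap f q.last ≤ p.last := hqp ▸ hlt.le
          exact this)
      have hQlt : q.last < ⟨Q, hQ⟩ := by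
        refine lt_of_le_of_ne hqQ fun h => hlt.ne ?_
        rw [← hqp, h]
        exact PrimeSpectrum.ext hQP
      exact ⟨q.snoc ⟨Q, hQ⟩ hQlt, by simp [hq], by simpa using PrimeSpectrum.ext hQP⟩
  refine iSup_le fun p => ?_
  obtain ⟨q, hq, -⟩ := lift _ p rfl
  rw [← hq]
  exact le_iSup (fun q : LTSeries (PrimeSpectrum S) => (q.length : WithBot ℕ∞)) q

/-- The Krull dimension of an affine domain is its transcendence degree. -/
theorem exists_ringKrullDim_eq_and_trdeg_eq (K B : Type*) [Field K] [CommRing B] [IsDomain B]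
    [Algebra K B] [Algebra.FiniteType K B] :
    ∃ s : ℕ, ringKrullDim B = s ∧ Algebra.trdeg K B = s := by
  obtain ⟨s, g, hinj, hint⟩ := exists_integral_inj_algHom_of_fg K B
  refine ⟨s, ?_, ?_⟩
  · rw [le_antisymm (ringKrullDim_le_of_ringHom_isIntegral _ hint)
      (ringKrullDim_le_of_ringHom_isIntegral_of_injective _ hint hinj),
      MvPolynomial.ringKrullDim_of_isNoetherianRing]
    simp
  · algebraize [g.toRingHom]
    have : FaithfulSMul (MvPolynomial (Fin s) K) B :=
      (faithfulSMul_iff_algebraMap_injective _ _).2 hinj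
    have h := lift_trdeg_add_eq K (MvPolynomial (Fin s) K) B
    rw [MvPolynomial.trdeg_of_isDomain, trdeg_eq_zero] at h
    simpa using h.symm

/-- If an affine algebra surjects onto `D` with kernel containing the kernel of a map to a
polynomial ring, then the dimension of `D` is bounded by the number of variables. -/
theorem ringKrullDim_le_card_of_ker_le {K T D ι : Type*} [Field K] [CommRing T] [CommRing D]
    [Algebra K T] [Algebra K D] [Algebra.FiniteType K T] [Fintype ι]
    (θ : T →ₐ[K] MvPolynomial ι K) (ψ : T →ₐ[K] D) (hψ : Function.Surjective ψ)
    (hker : RingHom.ker θ ≤ RingHom.ker ψ) : ringKrullDim D ≤ Fintype.card ι := by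
  have : Algebra.FiniteType K θ.range :=
    Algebra.FiniteType.of_surjective θ.rangeRestrict θ.rangeRestrict_surjective
  obtain ⟨s, hs, htr⟩ := exists_ringKrullDim_eq_and_trdeg_eq K θ.range
  have hsι : s ≤ Fintype.card ι := by
    have h := lift_trdeg_le_of_injective θ.range.val Subtype.val_injective
    rw [htr, MvPolynomial.trdeg_of_isDomain] at h
    simpa using h
  have hker' : RingHom.ker (θ.rangeRestrict : T →+* θ.range) ≤ RingHom.ker (ψ : T →+* D) := by
    intro x hx
    refine hker ?_
    have h0 : θ.rangeRestrict x = 0 := hx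
    exact congrArg Subtype.val h0
  let g : θ.range →+* D := (θ.rangeRestrict : T →+* θ.range).liftOfSurjective
    θ.rangeRestrict_surjective ⟨(ψ : T →+* D), hker'⟩
  have hg : Function.Surjective g := by
    intro d
    obtain ⟨x, rfl⟩ := hψ d
    exact ⟨θ.rangeRestrict x,
      RingHom.liftOfRightInverse_comp_apply _ _ _ ⟨(ψ : T →+* D), hker'⟩ x⟩
  calc ringKrullDim D ≤ ringKrullDim θ.range := ringKrullDim_le_of_surjective g hg
    _ = s := hs
    _ ≤ Fintype.card ι := by exact_mod_cast hsι

/-- An affine algebra containing a polynomial ring in `ι` has dimension at least the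
cardinality of `ι`. -/
theorem card_le_ringKrullDim_of_injective {K F ι : Type*} [Field K] [CommRing F] [Algebra K F]
    [Algebra.FiniteType K F] [Fintype ι] (g : MvPolynomial ι K →ₐ[K] F)
    (hg : Function.Injective g) : (Fintype.card ι : WithBot ℕ∞) ≤ ringKrullDim F := by
  obtain ⟨Q, hQ, -, hdisj⟩ := Ideal.exists_le_prime_disjoint (⊥ : Ideal F)
    ((nonZeroDivisors (MvPolynomial ι K)).map g) (by
      rw [Set.disjoint_left]
      rintro x hx ⟨p, hp, rfl⟩
      have h0 : g p = 0 := hx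
      exact nonZeroDivisors.ne_zero hp ((map_eq_zero_iff g hg).1 h0))
  let h : MvPolynomial ι K →ₐ[K] F ⧸ Q := (Ideal.Quotient.mkₐ K Q).comp g
  have hh : Function.Injective h := by
    rw [injective_iff_map_eq_zero]
    intro p hp
    by_contra hne
    exact Set.disjoint_left.1 hdisj (Ideal.Quotient.eq_zero_iff_mem.1 hp)
      ⟨p, mem_nonZeroDivisors_of_ne_zero hne, rfl⟩
  have : Algebra.FiniteType K (F ⧸ Q) :=
    Algebra.FiniteType.of_surjective (Ideal.Quotient.mkₐ K Q) (Ideal.Quotient.mkₐ_surjective K Q)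
  obtain ⟨s, hs, htr⟩ := exists_ringKrullDim_eq_and_trdeg_eq K (F ⧸ Q)
  have hsι : Fintype.card ι ≤ s := by
    have h' := lift_trdeg_le_of_injective h hh
    rw [htr, MvPolynomial.trdeg_of_isDomain] at h'
    simpa using h'
  calc (Fintype.card ι : WithBot ℕ∞) ≤ s := by exact_mod_cast hsι
    _ = ringKrullDim (F ⧸ Q) := hs.symm
    _ ≤ ringKrullDim F := ringKrullDim_quotient_le Q

/-- The dimension of `R ⧸ I` is bounded by the dimensions of `R ⧸ P` for primes `P ⊇ I`. -/
theorem ringKrullDim_quotient_le_of_forall_prime {R : Type*} [CommRing R] (I : Ideal R)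
    (N : WithBot ℕ∞) (h : ∀ P : Ideal R, P.IsPrime → I ≤ P → ringKrullDim (R ⧸ P) ≤ N) :
    ringKrullDim (R ⧸ I) ≤ N := by
  rw [ringKrullDim_quotient]
  refine iSup_le fun p => ?_
  refine le_trans ?_ (h p.head.1.asIdeal p.head.1.isPrime p.head.2)
  rw [ringKrullDim_quotient]
  let q : LTSeries (PrimeSpectrum.zeroLocus (R := R) p.head.1.asIdeal) :=
    { length := p.length
      toFun := fun i => ⟨(p i).1, LTSeries.head_le p i⟩
      step := fun i => p.step i }
  exact le_iSup (fun q : LTSeries (PrimeSpectrum.zeroLocus (R := R) p.head.1.asIdeal) =>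
    (q.length : WithBot ℕ∞)) q

/-- Two homomorphisms from a polynomial ring, the first sending monomials to monomials and the
second identifying all monomials identified by the first: the kernels are comparable. -/
theorem ker_le_ker_of_monomial {K D ι κ : Type*} [Field K] [CommRing D] [Algebra K D]
    (θ : MvPolynomial ι K →ₐ[K] MvPolynomial κ K) (ψ : MvPolynomial ι K →ₐ[K] D)
    (e : (ι →₀ ℕ) → (κ →₀ ℕ)) (hθ : ∀ m, θ (monomial m 1) = monomial (e m) 1)
    (hψ : ∀ m m', e m = e m' → ψ (monomial m 1) = ψ (monomial m' 1)) :
    RingHom.ker θ ≤ RingHom.ker ψ := by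
  classical
  let L : MvPolynomial κ K →ₗ[K] D := (basisMonomials κ K).constr K
    fun d => if h : ∃ m, e m = d then ψ (monomial h.choose 1) else 0
  have hL : L ∘ₗ θ.toLinearMap = ψ.toLinearMap := by
    refine (basisMonomials ι K).ext fun m => ?_
    have hex : ∃ m', e m' = e m := ⟨m, rfl⟩
    have : L (monomial (e m) 1) = ψ (monomial m 1) := by
      rw [show monomial (e m) (1 : K) = basisMonomials κ K (e m) by simp,
        Module.Basis.constr_basis, dif_pos hex]
      exact hψ _ _ hex.choose_spec
    simpa [hθ] using this
  intro x hx
  have h0 : θ x = 0 := hx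
  have := LinearMap.congr_fun hL x
  simp only [LinearMap.comp_apply, AlgHom.toLinearMap_apply, h0, map_zero] at this
  exact this.symm

/-- A free parameter set has at most as many elements as the graph has vertices. -/
theorem HasFreeParameterSet.le {n r : ℕ} {G : SimpleGraph (Fin n)}
    (h : HasFreeParameterSet G r) : r ≤ n := by
  obtain ⟨a, _, ha, -⟩ := h
  simpa using Fintype.card_le_of_injective a ha

theorem bddAbove_hasFreeParameterSet {n : ℕ} (G : SimpleGraph (Fin n)) :
    BddAbove {r : ℕ | HasFreeParameterSet G r} :=
  ⟨n, fun _ h => HasFreeParameterSet.le h⟩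

theorem hasFreeParameterSet_zero {n : ℕ} (G : SimpleGraph (Fin n)) :
    HasFreeParameterSet G 0 :=
  ⟨Fin.elim0, Fin.elim0, fun i => i.elim0, fun i => i.elim0, fun i => i.elim0,
    fun i => i.elim0, fun i => i.elim0, fun i => i.elim0⟩

/-- For a family of vertex covers such that every vertex lies on an edge met exactly once by
every member, the incidence patterns of the vertices in `A` are represented by a free parameter
set. -/
theorem exists_isFreeParameterPair_of_tight {n : ℕ} {G : SimpleGraph (Fin n)}
    {A : Finset (Fin n)} (hbip : ∀ i j : Fin n, G.Adj i j → (i ∈ A ↔ j ∉ A))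
    {ι : Type*} [Fintype ι] (c : ι → Finset (Fin n))
    (hcover : ∀ s i j, G.Adj i j → i ∈ c s ∨ j ∈ c s)
    (htight : ∀ i, ∃ j, G.Adj i j ∧ ∀ s, i ∈ c s ↔ j ∉ c s) :
    ∃ (r : ℕ) (a b : Fin r → Fin n), IsFreeParameterPair G a b ∧
      ∀ i ∈ A, ∃ p, ∀ s, i ∈ c s ↔ a p ∈ c s := by
  classical
  choose φ hφ hφc using htight
  let v : Fin n → Finset ι := fun i => Finset.univ.filter fun s => i ∈ c s
  have hv : ∀ i s, s ∈ v i ↔ i ∈ c s := by simp [v]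
  let U := A.image v
  let e₀ := U.equivFin
  let σ := Tuple.sort fun p => OrderDual.toDual (e₀.symm p).1.card
  have hσ : Monotone ((fun p => OrderDual.toDual (e₀.symm p).1.card) ∘ σ) := Tuple.monotone_sort _
  have hex : ∀ p, ∃ i ∈ A, v i = (e₀.symm (σ p)).1 := fun p =>
    Finset.mem_image.1 (e₀.symm (σ p)).2
  choose a haA hav using hex
  have hinj : ∀ p q, v (a p) = v (a q) → p = q := by
    intro p q h
    rw [hav, hav] at h
    exact σ.injective (e₀.symm.injective (Subtype.ext h))
  refine ⟨U.card, a, fun p => φ (a p), ⟨fun p q h => hinj p q (by rw [h]), ?_, ?_, ?_, ?_, ?_⟩, ?_⟩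
  · intro p q h
    refine hinj p q (Finset.ext fun s => ?_)
    rw [hv, hv, hφc (a p), hφc (a q), show φ (a p) = φ (a q) from h]
  · intro p q h
    exact (hbip _ _ h).1 (haA p) (haA q)
  · intro p q h
    exact (hbip _ _ (hφ (a q))).1 (haA q)
      ((show a p = φ (a q) from h) ▸ haA p)
  · exact fun p => hφ (a p)
  · intro p q h
    have hsub : v (a q) ⊆ v (a p) := by
      intro s hs
      rw [hv] at hs ⊢
      exact (hcover s _ _ h).resolve_right ((hφc _ s).1 hs)
    by_contra hlt
    have hcard : (v (a p)).card ≤ (v (a q)).card := by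
      rw [hav, hav]
      exact hσ (not_le.1 hlt).le
    exact hlt (hinj q p (Finset.eq_of_subset_of_card_le hsub hcard)).ge
  · intro i hi
    refine ⟨σ.symm (e₀ ⟨v i, Finset.mem_image_of_mem v hi⟩), fun s => ?_⟩
    rw [← hv, ← hv, hav]
    simp

/-- A free parameter set of size `r` gives a potential on the vertices, monotone along edges out
of `A`, for which each vertex lies on an edge of constant potential, and which takes `r` distinct
positive values on `A`. -/
theorem HasFreeParameterSet.exists_potential {n r : ℕ} {G : SimpleGraph (Fin n)}
    {A : Finset (Fin n)} (hbip : ∀ i j : Fin n, G.Adj i j → (i ∈ A ↔ j ∉ A))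
    (hiso : ∀ v : Fin n, ∃ w, G.Adj v w) (h : HasFreeParameterSet G r) :
    ∃ (H : Option (Fin r) → ℕ) (z : Fin n → ℕ), Function.Injective H ∧ H none = 0 ∧
      (∀ p, ∃ i ∈ A, z i = H (some p)) ∧
      (∀ i j, i ∈ A → G.Adj i j → z i ≤ z j) ∧
      (∀ i, ∃ j, G.Adj i j ∧ z i = z j) := by
  classical
  obtain ⟨a, b, ha, hb, haa, hab, hadj, hle⟩ := h
  let a' : Fin r → Fin n := fun p => if a p ∈ A then a p else b p
  let b' : Fin r → Fin n := fun p => if a p ∈ A then b p else a p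
  let h' : Fin r → ℕ := fun p => if a p ∈ A then r + 1 + p else r - p
  have ha'A : ∀ p, a' p ∈ A := by
    intro p
    by_cases hp : a p ∈ A
    · simp [a', hp]
    · simpa [a', hp] using (not_iff_comm.1 (hbip _ _ (hadj p)).symm).1 hp
  have hadj' : ∀ p, G.Adj (a' p) (b' p) := by
    intro p
    by_cases hp : a p ∈ A
    · simpa [a', b', hp] using hadj p
    · simpa [a', b', hp] using (hadj p).symm
  have hb'inj : Function.Injective b' := by
    intro p q hpq
    by_cases hp : a p ∈ A <;> by_cases hq : a q ∈ A <;> simp only [b', hp, hq, if_true, if_false] at hpq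
    · exact hb hpq
    · exact absurd hpq.symm (hab _ _)
    · exact absurd hpq (hab _ _)
    · exact ha hpq
  have hle' : ∀ p q, G.Adj (a' p) (b' q) → h' p ≤ h' q := by
    intro p q hpq
    by_cases hp : a p ∈ A <;> by_cases hq : a q ∈ A <;>
      simp only [a', b', h', hp, hq, if_true, if_false] at hpq ⊢
    · have := hle _ _ hpq
      simpa using this
    · exact absurd hpq (haa _ _)
    · omega
    · have : q ≤ p := hle _ _ hpq.symm
      have : (q : ℕ) ≤ p := this
      omega
  let w : Fin n → ℕ := fun j => if h : ∃ q, b' q = j then h' h.choose else 2 * r + 1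
  have hwb : ∀ q, w (b' q) = h' q := by
    intro q
    have hex : ∃ q', b' q' = b' q := ⟨q, rfl⟩
    simp only [w, dif_pos hex]
    rw [hb'inj hex.choose_spec]
  have hh' : ∀ p, h' p ≤ 2 * r + 1 ∧ 0 < h' p := by
    intro p
    have := p.2
    by_cases hp : a p ∈ A <;> simp only [h', hp, if_true, if_false] <;> omega
  have hh'inj : Function.Injective h' := by
    intro p q hpq
    have := p.2
    have := q.2
    by_cases hp : a p ∈ A <;> by_cases hq : a q ∈ A <;>
      simp only [h', hp, hq, if_true, if_false] at hpq <;> ext <;> omega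
  have hmin : ∀ i, ∃ j, G.Adj i j ∧ ∀ j', G.Adj i j' → w j ≤ w j' := by
    intro i
    obtain ⟨j, hj, hj'⟩ := Finset.exists_min_image (Finset.univ.filter (G.Adj i)) w
      ((hiso i).imp fun j hj => by simpa using hj)
    exact ⟨j, by simpa using hj, fun j' h => hj' j' (by simpa using h)⟩
  choose φ hφ hφw using hmin
  have hmax : ∀ j, ∃ i, G.Adj j i ∧ ∀ i', G.Adj j i' → w (φ i') ≤ w (φ i) := by
    intro j
    obtain ⟨i, hi, hi'⟩ := Finset.exists_max_image (Finset.univ.filter (G.Adj j))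
      (fun i => w (φ i)) ((hiso j).imp fun i hi => by simpa using hi)
    exact ⟨i, by simpa using hi, fun i' h => hi' i' (by simpa using h)⟩
  choose χ hχ hχw using hmax
  have hwφ : ∀ p, w (φ (a' p)) = h' p := by
    intro p
    apply le_antisymm
    · exact (hφw _ _ (hadj' p)).trans (hwb p).le
    · by_cases hex : ∃ q, b' q = φ (a' p)
      · obtain ⟨q, hq⟩ := hex
        rw [← hq, hwb]
        exact hle' _ _ (hq ▸ hφ (a' p))
      · simpa [w, hex] using (hh' p).1
  refine ⟨fun o => o.elim 0 h', fun i => if i ∈ A then w (φ i) else w (φ (χ i)), ?_, rfl, ?_, ?_, ?_⟩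
  · rintro (_ | p) (_ | q) hpq
    · rfl
    · exact absurd hpq (hh' q).2.ne
    · exact absurd hpq (hh' p).2.ne'
    · exact congrArg some (hh'inj hpq)
  · exact fun p => ⟨a' p, ha'A p, by simp [ha'A p, hwφ p]⟩
  · intro i j hi hij
    have hj : j ∉ A := (hbip _ _ hij).1 hi
    simp only [hi, hj, if_true, if_false]
    exact hχw _ _ hij.symm
  · intro i
    by_cases hi : i ∈ A
    · have hj : φ i ∉ A := (hbip _ _ (hφ i)).1 hi
      refine ⟨φ i, hφ i, ?_⟩
      simp only [hi, hj, if_true, if_false]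
      exact le_antisymm (hχw _ _ (hφ i).symm) (hφw _ _ (hχ (φ i)).symm)
    · have hj : χ i ∈ A := by
        by_contra hj
        exact hi ((hbip _ _ (hχ i)).2 hj)
      exact ⟨χ i, hχ i, by simp [hi, hj]⟩

/-- The upper partial sums with respect to an injective level function determine a family. -/
theorem eq_of_sum_filter_le_eq {ι : Type*} [Fintype ι] {H : ι → ℕ} (hH : Function.Injective H)
    {m m' : ι → ℕ}
    (h : ∀ o, ∑ s with H o ≤ H s, m s = ∑ s with H o ≤ H s, m' s) : m = m' := by
  classical
  by_contra hne
  have hnon : (Finset.univ.filter fun s => m s ≠ m' s).Nonempty := by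
    obtain ⟨s, hs⟩ := Function.ne_iff.1 hne
    exact ⟨s, by simpa using hs⟩
  obtain ⟨o, ho, hmax⟩ := Finset.exists_max_image _ H hnon
  have hmem : o ∈ Finset.univ.filter fun s => H o ≤ H s := by simp
  have hrest : ∑ s ∈ (Finset.univ.filter fun s => H o ≤ H s).erase o, m s =
      ∑ s ∈ (Finset.univ.filter fun s => H o ≤ H s).erase o, m' s := by
    refine Finset.sum_congr rfl fun s hs => ?_
    simp only [Finset.mem_erase, Finset.mem_filter, Finset.mem_univ, true_and] at hs
    by_contra hs'
    exact hs.1 (hH (le_antisymm (hmax s (by simpa using hs')) hs.2))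
  have := h o
  rw [← Finset.add_sum_erase _ _ hmem, ← Finset.add_sum_erase _ _ hmem, hrest] at this
  simp only [Finset.mem_filter, Finset.mem_univ, true_and] at ho
  omega

/-- An exponent vector is a `k`-cover if its values on the ends of any edge add up to at least
`k`. -/
def IsKCover {n : ℕ} (G : SimpleGraph (Fin n)) (k : ℕ) (m : Fin n →₀ ℕ) : Prop :=
  ∀ i j, G.Adj i j → k ≤ m i + m j

/-- The exponent vector of the squarefree monomial supported on `c`. -/
noncomputable def squarefreeExponent {n : ℕ} (c : Finset (Fin n)) : Fin n →₀ ℕ :=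
  Finsupp.equivFunOnFinite.symm fun i => if i ∈ c then 1 else 0

theorem squarefreeExponent_apply {n : ℕ} (c : Finset (Fin n)) (i : Fin n) :
    squarefreeExponent c i = if i ∈ c then 1 else 0 := rfl

theorem isKCover_one_squarefreeExponent {n : ℕ} {G : SimpleGraph (Fin n)} {c : Finset (Fin n)} :
    IsKCover G 1 (squarefreeExponent c) ↔ ∀ i j, G.Adj i j → i ∈ c ∨ j ∈ c := by
  refine forall₃_congr fun i j _ => ?_
  simp only [squarefreeExponent_apply]
  by_cases hi : i ∈ c <;> by_cases hj : j ∈ c <;> simp [hi, hj]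

section CoverIdeal

variable {K : Type*} [Field K] {n : ℕ} {G : SimpleGraph (Fin n)}

theorem mem_coverIdeal_iff {f : MvPolynomial (Fin n) K} :
    f ∈ coverIdeal K G ↔ ∀ m ∈ f.support, IsKCover G 1 m := by
  simp only [coverIdeal, Submodule.mem_iInf, mem_ideal_span_X_image]
  constructor
  · intro h m hm i j hij
    obtain ⟨v, hv, hmv⟩ := h s(i, j) hij m hm
    rcases Sym2.mem_iff.1 hv with rfl | rfl <;> omega
  · intro h e he m hm
    induction e using Sym2.ind with
    | _ i j =>
      have := h m hm i j he
      by_cases hi : m i = 0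
      · exact ⟨j, Sym2.mem_mk_right i j, by omega⟩
      · exact ⟨i, Sym2.mem_mk_left i j, hi⟩

theorem isKCover_of_mem_coverIdeal_pow {k : ℕ} {f : MvPolynomial (Fin n) K}
    (hf : f ∈ coverIdeal K G ^ k) {m : Fin n →₀ ℕ} (hm : m ∈ f.support) : IsKCover G k m := by
  classical
  induction k generalizing f m with
  | zero => exact fun i j _ => Nat.zero_le _
  | succ k ih =>
    rw [pow_succ] at hf
    induction hf using Submodule.mul_induction_on' generalizing m with
    | mem_mul_mem p hp q hq =>
      obtain ⟨u, hu, v, hv, rfl⟩ := Finset.mem_add.1 (support_mul p q hm)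
      intro i j hij
      have h₁ := ih hp hu i j hij
      have h₂ := mem_coverIdeal_iff.1 hq v hv i j hij
      simp only [Finsupp.add_apply]
      omega
    | add p hp q hq hp' hq' =>
      rcases Finset.mem_union.1 (support_add hm) with h | h
      · exact hp' h
      · exact hq' h

/-- In a bipartite graph a `(k + 1)`-cover is the sum of a `k`-cover and a vertex cover. -/
theorem IsKCover.exists_eq_add {A : Finset (Fin n)}
    (hbip : ∀ i j : Fin n, G.Adj i j → (i ∈ A ↔ j ∉ A)) {k : ℕ} {m : Fin n →₀ ℕ}
    (hm : IsKCover G (k + 1) m) :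
    ∃ m' c, IsKCover G k m' ∧ IsKCover G 1 (squarefreeExponent c) ∧
      m = m' + squarefreeExponent c := by
  classical
  let c : Finset (Fin n) := Finset.univ.filter fun i => if i ∈ A then k + 1 ≤ m i else 1 ≤ m i
  have hc : ∀ i, squarefreeExponent c i =
      if i ∈ A then (if k + 1 ≤ m i then 1 else 0) else (if 1 ≤ m i then 1 else 0) := by
    intro i
    by_cases hi : i ∈ A <;> simp [squarefreeExponent_apply, c, hi]
  have key : ∀ i j, i ∈ A → j ∉ A → k + 1 ≤ m i + m j →
      k ≤ m i - squarefreeExponent c i + (m j - squarefreeExponent c j) ∧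
      1 ≤ squarefreeExponent c i + squarefreeExponent c j := by
    intro i j hi hj hij
    rw [hc i, hc j, if_pos hi, if_neg hj]
    split_ifs <;> omega
  have key' : ∀ i j, G.Adj i j →
      k ≤ m i - squarefreeExponent c i + (m j - squarefreeExponent c j) ∧
      1 ≤ squarefreeExponent c i + squarefreeExponent c j := by
    intro i j hij
    have hm' := hm i j hij
    by_cases hi : i ∈ A
    · exact key i j hi ((hbip _ _ hij).1 hi) hm'
    · have hj : j ∈ A := by
        by_contra hj
        exact hi ((hbip _ _ hij).2 hj)
      have := key j i hj hi (by omega)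
      omega
  refine ⟨m - squarefreeExponent c, c, fun i j hij => (key' i j hij).1,
    fun i j hij => (key' i j hij).2, ?_⟩
  ext i
  have : squarefreeExponent c i ≤ m i := by
    rw [hc]
    split_ifs <;> omega
  simp only [Finsupp.add_apply, Finsupp.tsub_apply]
  omega

theorem IsKCover.monomial_mem_coverIdeal {m : Fin n →₀ ℕ} (hm : IsKCover G 1 m) (x : K) :
    monomial m x ∈ coverIdeal K G := by
  refine mem_coverIdeal_iff.2 fun m' hm' => ?_
  rwa [Finset.mem_singleton.1 (support_monomial_subset hm')]

theorem IsKCover.monomial_mem_coverIdeal_pow {A : Finset (Fin n)}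
    (hbip : ∀ i j : Fin n, G.Adj i j → (i ∈ A ↔ j ∉ A)) {k : ℕ} {m : Fin n →₀ ℕ}
    (hm : IsKCover G k m) : monomial m (1 : K) ∈ coverIdeal K G ^ k := by
  induction k generalizing m with
  | zero => simp
  | succ k ih =>
    obtain ⟨m', c, hm', hc, rfl⟩ := hm.exists_eq_add hbip
    rw [show monomial (m' + squarefreeExponent c) (1 : K) =
      monomial m' 1 * monomial (squarefreeExponent c) 1 by simp [monomial_mul], pow_succ]
    exact Ideal.mul_mem_mul (ih hm') (hc.monomial_mem_coverIdeal 1)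

end CoverIdeal

section ReesAlgebra

variable (K : Type*) [Field K] {n : ℕ} (G : SimpleGraph (Fin n))

/-- The monomials `x^c t` of the Rees algebra attached to the vertex covers `c`. -/
noncomputable def coverGenerator
    (c : {c : Finset (Fin n) // IsKCover G 1 (squarefreeExponent c)}) :
    reesAlgebra (coverIdeal K G) :=
  ⟨Polynomial.monomial 1 (monomial (squarefreeExponent c.1) 1),
    reesAlgebra.monomial_mem.2 (by simpa using c.2.monomial_mem_coverIdeal 1)⟩

/-- The variables `x_i`, as elements of degree zero of the Rees algebra. -/
noncomputable def reesVariable (i : Fin n) : reesAlgebra (coverIdeal K G) :=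
  ⟨Polynomial.C (X i), Subalgebra.algebraMap_mem _ _⟩

theorem reesIrrelevantIdeal_eq_span_range :
    reesIrrelevantIdeal K G = Ideal.span (Set.range (reesVariable K G)) := by
  refine congrArg Ideal.span (Set.ext fun a => ?_)
  exact ⟨fun ⟨i, hi⟩ => ⟨i, Subtype.ext hi.symm⟩, fun ⟨i, hi⟩ => ⟨i, hi ▸ rfl⟩⟩

instance : Algebra.FiniteType K (reesAlgebra (coverIdeal K G)) := by
  have : Algebra.FiniteType (MvPolynomial (Fin n) K) (reesAlgebra (coverIdeal K G)) :=
    (Subalgebra.fg_iff_finiteType _).1 (reesAlgebra.fg (IsNoetherian.noetherian _))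
  exact Algebra.FiniteType.trans (S := MvPolynomial (Fin n) K) inferInstance this

variable {K G}

/-- The value of a monomial in elements `x^c t` of the Rees algebra. -/
theorem coe_aeval_coverGenerator_monomial {ι : Type*} [Fintype ι]
    (c : ι → {c : Finset (Fin n) // IsKCover G 1 (squarefreeExponent c)}) (m : ι →₀ ℕ) :
    (aeval (fun s => coverGenerator K G (c s)) (monomial m (1 : K)) :
        Polynomial (MvPolynomial (Fin n) K)) =
      Polynomial.monomial (∑ s, m s)
        (monomial (∑ s, m s • squarefreeExponent (c s).1) (1 : K)) := by
  classical
  rw [aeval_monomial, map_one, one_mul, Finsupp.prod_fintype _ _ (by simp)]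
  push_cast
  simp only [coverGenerator, Polynomial.monomial_pow, monomial_pow, one_pow, one_mul]
  generalize (Finset.univ : Finset ι) = S
  induction S using Finset.induction_on with
  | empty => simp
  | insert a S ha ih =>
    rw [Finset.prod_insert ha, Finset.sum_insert ha, Finset.sum_insert ha, ih,
      Polynomial.monomial_mul_monomial, monomial_mul, one_mul]

/-- Elements of `m R(J(G))` have no monomial `x^m t^k` for which every vertex lies on an edge
where the values of `m` add up to `k`. -/
theorem coeff_eq_zero_of_mem_reesIrrelevantIdeal {x : reesAlgebra (coverIdeal K G)}
    (hx : x ∈ reesIrrelevantIdeal K G) {k : ℕ} {m : Fin n →₀ ℕ}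
    (hm : ∀ i, ∃ j, G.Adj i j ∧ m i + m j = k) :
    coeff m ((x : Polynomial (MvPolynomial (Fin n) K)).coeff k) = 0 := by
  classical
  rw [reesIrrelevantIdeal_eq_span_range, Ideal.mem_span_range_iff_exists_fun] at hx
  obtain ⟨g, rfl⟩ := hx
  push_cast
  rw [Polynomial.finsetSum_coeff, coeff_sum]
  refine Finset.sum_eq_zero fun i _ => ?_
  simp only [reesVariable, Polynomial.coeff_mul_C]
  rw [coeff_mul_X']
  split_ifs with hi
  · by_contra hne
    have hcov := isKCover_of_mem_coverIdeal_pow ((g i).2 k) (mem_support_iff.2 hne)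
    obtain ⟨j, hij, hmk⟩ := hm i
    have := hcov i j hij
    have hmi : m i ≠ 0 := Finsupp.mem_support_iff.1 hi
    simp only [Finsupp.tsub_apply, Finsupp.single_eq_same,
      Finsupp.single_eq_of_ne hij.ne'] at this
    omega
  · rfl

end ReesAlgebra

section Bounds

variable (K : Type*) [Field K] {n : ℕ} {G : SimpleGraph (Fin n)} {A : Finset (Fin n)}

theorem le_ringKrullDim_ordinaryFiberCone
    (hbip : ∀ i j : Fin n, G.Adj i j → (i ∈ A ↔ j ∉ A))
    (hiso : ∀ v : Fin n, ∃ w, G.Adj v w) {r : ℕ} (hr : HasFreeParameterSet G r) :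
    ((r + 1 : ℕ) : WithBot ℕ∞) ≤ ringKrullDim (ordinaryFiberCone K G) := by
  classical
  obtain ⟨H, z, hH, hH0, hHz, hmono, htight⟩ := hr.exists_potential hbip hiso
  let c₀ : Option (Fin r) → Finset (Fin n) := fun s =>
    Finset.univ.filter fun i => if i ∈ A then z i ≤ H s else H s < z i
  have hA : ∀ s i, i ∈ A → (i ∈ c₀ s ↔ z i ≤ H s) := fun s i hi => by simp [c₀, hi]
  have hB : ∀ s i, i ∉ A → (i ∈ c₀ s ↔ H s < z i) := fun s i hi => by simp [c₀, hi]
  have hAB : ∀ i j, G.Adj i j → i ∉ A → j ∈ A := fun i j hij hi => by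
    by_contra hj
    exact hi ((hbip _ _ hij).2 hj)
  have hcover : ∀ s, IsKCover G 1 (squarefreeExponent (c₀ s)) := by
    intro s
    have key : ∀ i j, i ∈ A → G.Adj i j → i ∈ c₀ s ∨ j ∈ c₀ s := by
      intro i j hi hij
      rw [hA s i hi, hB s j ((hbip _ _ hij).1 hi)]
      have := hmono i j hi hij
      omega
    rw [isKCover_one_squarefreeExponent]
    intro i j hij
    by_cases hi : i ∈ A
    · exact key i j hi hij
    · exact (key j i (hAB i j hij hi) hij.symm).symm
  have hone : ∀ i, ∃ j, G.Adj i j ∧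
      ∀ s, squarefreeExponent (c₀ s) i + squarefreeExponent (c₀ s) j = 1 := by
    intro i
    obtain ⟨j, hij, hz⟩ := htight i
    refine ⟨j, hij, fun s => ?_⟩
    simp only [squarefreeExponent_apply]
    by_cases hi : i ∈ A
    · simp only [hA s i hi, hB s j ((hbip _ _ hij).1 hi), hz]
      split_ifs <;> omega
    · simp only [hB s i hi, hA s j (hAB i j hij hi), hz]
      split_ifs <;> omega
  let c : Option (Fin r) → {c : Finset (Fin n) // IsKCover G 1 (squarefreeExponent c)} :=
    fun s => ⟨c₀ s, hcover s⟩
  let deg : (Option (Fin r) →₀ ℕ) → ℕ := fun m => ∑ s, m s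
  let e : (Option (Fin r) →₀ ℕ) → Fin n →₀ ℕ := fun m =>
    ∑ s, m s • squarefreeExponent (c₀ s)
  have he : ∀ m i, e m i = ∑ s, m s * squarefreeExponent (c₀ s) i := by
    intro m i
    simp [e]
  have hinj : ∀ m m', deg m = deg m' → e m = e m' → m = m' := by
    intro m m' hd hee
    refine DFunLike.coe_injective (eq_of_sum_filter_le_eq hH fun o => ?_)
    cases o with
    | none => simpa [hH0, deg] using hd
    | some p =>
      obtain ⟨i, hi, hzi⟩ := hHz p
      have := DFunLike.congr_fun hee i
      rw [he, he] at this
      simpa [squarefreeExponent_apply, hA _ i hi, hzi, Finset.sum_filter] using this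
  have hetight : ∀ m i, ∃ j, G.Adj i j ∧ e m i + e m j = deg m := by
    intro m i
    obtain ⟨j, hij, hj⟩ := hone i
    refine ⟨j, hij, ?_⟩
    rw [he, he, ← Finset.sum_add_distrib]
    exact Finset.sum_congr rfl fun s _ => by rw [← mul_add, hj, mul_one]
  let Φ : MvPolynomial (Option (Fin r)) K →ₐ[K] reesAlgebra (coverIdeal K G) :=
    aeval fun s => coverGenerator K G (c s)
  have hcoeff : ∀ (m : Option (Fin r) →₀ ℕ) (f : MvPolynomial (Option (Fin r)) K),
      coeff (e m) ((Φ f : Polynomial (MvPolynomial (Fin n) K)).coeff (deg m)) = coeff m f := by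
    intro m f
    induction f using MvPolynomial.induction_on' with
    | monomial u x =>
      have hu : (Φ (monomial u x) : Polynomial (MvPolynomial (Fin n) K)) =
          x • Polynomial.monomial (deg u) (monomial (e u) (1 : K)) := by
        rw [← coe_aeval_coverGenerator_monomial c u, ← mul_one x, ← smul_eq_mul,
          ← smul_monomial, map_smul]
        simp [Φ]
      rw [hu, Polynomial.coeff_smul, coeff_smul, Polynomial.coeff_monomial, coeff_monomial]
      by_cases hum : u = m
      · simp [hum]
      · rw [if_neg hum]
        split_ifs with hd
        · rw [coeff_monomial, if_neg fun h => hum (hinj _ _ hd h), smul_zero]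
        · simp
    | add p q hp hq =>
      rw [map_add, coeff_add, ← hp, ← hq]
      simp
  let g : MvPolynomial (Option (Fin r)) K →ₐ[K]
      reesAlgebra (coverIdeal K G) ⧸ reesIrrelevantIdeal K G :=
    (Ideal.Quotient.mkₐ K _).comp Φ
  have hg : Function.Injective g := by
    rw [injective_iff_map_eq_zero]
    intro f hf
    ext m
    rw [← hcoeff m f, coeff_zero]
    exact coeff_eq_zero_of_mem_reesIrrelevantIdeal (Ideal.Quotient.eq_zero_iff_mem.1 hf)
      (hetight m)
  have : Algebra.FiniteType K (reesAlgebra (coverIdeal K G) ⧸ reesIrrelevantIdeal K G) :=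
    Algebra.FiniteType.of_surjective (Ideal.Quotient.mkₐ K _) (Ideal.Quotient.mkₐ_surjective K _)
  have h := card_le_ringKrullDim_of_injective
    (F := reesAlgebra (coverIdeal K G) ⧸ reesIrrelevantIdeal K G) g hg
  rw [Fintype.card_option, Fintype.card_fin] at h
  exact h

variable {K}

/-- For a prime `P ⊇ m R(J(G))`, every vertex lies on an edge met exactly once by all vertex
covers whose generators lie outside `P`. -/
theorem exists_adj_forall_coverGenerator_notMem
    (hbip : ∀ i j : Fin n, G.Adj i j → (i ∈ A ↔ j ∉ A))
    (hiso : ∀ v : Fin n, ∃ w, G.Adj v w) {P : Ideal (reesAlgebra (coverIdeal K G))}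
    [P.IsPrime] (hP : reesIrrelevantIdeal K G ≤ P) (i : Fin n) :
    ∃ j, G.Adj i j ∧ ∀ c, coverGenerator K G c ∉ P → (i ∈ c.1 ↔ j ∉ c.1) := by
  classical
  by_contra! hcon
  have hbad : ∀ j, ∃ c, G.Adj i j → coverGenerator K G c ∉ P ∧ i ∈ c.1 ∧ j ∈ c.1 := by
    intro j
    by_cases hij : G.Adj i j
    · obtain ⟨c, hc, hc'⟩ := hcon j hij
      refine ⟨c, fun _ => ⟨hc, ?_⟩⟩
      have := isKCover_one_squarefreeExponent.1 c.2 i j hij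
      tauto
    · exact ⟨⟨Finset.univ, isKCover_one_squarefreeExponent.2 (by simp)⟩, fun h => absurd h hij⟩
  choose c hc using hbad
  let N := Finset.univ.filter (G.Adj i)
  have hN : ∀ j, j ∈ N ↔ G.Adj i j := by simp [N]
  let e : Fin n →₀ ℕ := ∑ j ∈ N, squarefreeExponent (c j).1
  have he : ∀ l, e l = ∑ j ∈ N, squarefreeExponent (c j).1 l := fun l => by
    simp [e, Finsupp.finsetSum_apply]
  have hei : e i = N.card := by
    rw [he, Finset.card_eq_sum_ones]
    refine Finset.sum_congr rfl fun j hj => ?_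
    simp [squarefreeExponent_apply, (hc j ((hN j).1 hj)).2.1]
  have hej : ∀ j, G.Adj i j → 1 ≤ e j := by
    intro j hij
    rw [he]
    refine le_trans ?_ (Finset.single_le_sum (fun _ _ => Nat.zero_le _) ((hN j).2 hij))
    simp [squarefreeExponent_apply, (hc j hij).2.2]
  have hcov : IsKCover G N.card e := by
    intro l l' hll'
    rw [he, he, ← Finset.sum_add_distrib, Finset.card_eq_sum_ones]
    exact Finset.sum_le_sum fun j _ => (c j).2 l l' hll'
  have hpos : 0 < N.card := by
    obtain ⟨j, hij⟩ := hiso i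
    exact Finset.card_pos.2 ⟨j, (hN j).2 hij⟩
  have hcov' : IsKCover G N.card (e - Finsupp.single i 1) := by
    have key : ∀ j, G.Adj i j → N.card ≤
        (e - Finsupp.single i 1 : Fin n →₀ ℕ) i + (e - Finsupp.single i 1 : Fin n →₀ ℕ) j := by
      intro j hij
      have := hej j hij
      simp only [Finsupp.tsub_apply, Finsupp.single_eq_same, Finsupp.single_eq_of_ne hij.ne']
      omega
    intro l l' hll'
    by_cases hl : l = i
    · subst hl
      exact key l' hll'
    · by_cases hl' : l' = i
      · subst hl'
        rw [add_comm]
        exact key l hll'.symm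
      · simpa [Finsupp.single_eq_of_ne hl, Finsupp.single_eq_of_ne hl'] using hcov l l' hll'
  have hprod : ∀ S : Finset (Fin n),
      ((∏ j ∈ S, coverGenerator K G (c j) : reesAlgebra (coverIdeal K G)) :
        Polynomial (MvPolynomial (Fin n) K)) =
      Polynomial.monomial S.card (monomial (∑ j ∈ S, squarefreeExponent (c j).1) 1) := by
    intro S
    induction S using Finset.induction_on with
    | empty => simp
    | insert a S ha ih =>
      rw [Finset.prod_insert ha, Finset.sum_insert ha, Finset.card_insert_of_notMem ha]
      push_cast at ih ⊢
      rw [ih, coverGenerator, Polynomial.monomial_mul_monomial, monomial_mul, one_mul, add_comm 1]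
  have hfac : ∏ j ∈ N, coverGenerator K G (c j) = reesVariable K G i *
      ⟨Polynomial.monomial N.card (monomial (e - Finsupp.single i 1) 1),
        reesAlgebra.monomial_mem.2 (hcov'.monomial_mem_coverIdeal_pow hbip)⟩ := by
    refine Subtype.ext ?_
    rw [hprod]
    simp only [reesVariable, MulMemClass.mk_mul_mk, Polynomial.C_mul_monomial]
    rw [X, monomial_mul, one_mul, add_tsub_cancel_of_le]
    intro l
    by_cases hl : l = i
    · subst hl
      rw [Finsupp.single_eq_same]
      omega
    · simp [Finsupp.single_eq_of_ne hl]
  have hmem : ∏ j ∈ N, coverGenerator K G (c j) ∈ P := by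
    rw [hfac]
    refine P.mul_mem_right _ (hP ?_)
    rw [reesIrrelevantIdeal_eq_span_range]
    exact Ideal.subset_span ⟨i, rfl⟩
  obtain ⟨j, hj, hjP⟩ := Ideal.IsPrime.prod_mem_iff.1 hmem
  exact (hc j ((hN j).1 hj)).1 hjP

/-- A subalgebra of the Rees algebra containing the variables times anything and all
generators `x^c t` is everything. -/
theorem mem_subalgebra_of_coverGenerator_mem
    (hbip : ∀ i j : Fin n, G.Adj i j → (i ∈ A ↔ j ∉ A))
    (B : Subalgebra K (reesAlgebra (coverIdeal K G)))
    (hvar : ∀ i x, reesVariable K G i * x ∈ B) (hgen : ∀ c, coverGenerator K G c ∈ B)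
    (f : reesAlgebra (coverIdeal K G)) : f ∈ B := by
  classical
  have hmon : ∀ (k : ℕ) (m : Fin n →₀ ℕ) (hm : IsKCover G k m),
      (⟨Polynomial.monomial k (monomial m 1), reesAlgebra.monomial_mem.2
        (hm.monomial_mem_coverIdeal_pow hbip)⟩ : reesAlgebra (coverIdeal K G)) ∈ B := by
    intro k
    induction k with
    | zero =>
      intro m hm
      by_cases h0 : m = 0
      · subst h0
        convert! B.one_mem
      · obtain ⟨i, hi⟩ := Finsupp.ne_iff.1 h0
        convert! hvar i ⟨Polynomial.monomial 0 (monomial (m - Finsupp.single i 1) 1),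
          reesAlgebra.monomial_mem.2 (by simp)⟩ using 1
        refine Subtype.ext ?_
        change _ = Polynomial.C (X i) * Polynomial.monomial 0 _
        rw [Polynomial.C_mul_monomial, X, monomial_mul, one_mul, add_tsub_cancel_of_le]
        rw [Finsupp.single_le_iff]
        exact Nat.one_le_iff_ne_zero.2 hi
    | succ k ih =>
      intro m hm
      obtain ⟨m', c, hm', hc, rfl⟩ := hm.exists_eq_add hbip
      convert! B.mul_mem (ih m' hm') (hgen ⟨c, hc⟩) using 1
      refine Subtype.ext ?_
      simp [coverGenerator, Polynomial.monomial_mul_monomial, monomial_mul]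
  let W : Submodule K (Polynomial (MvPolynomial (Fin n) K)) :=
    (Subalgebra.toSubmodule B).map
      ((reesAlgebra (coverIdeal K G)).val.restrictScalars K).toLinearMap
  have hW : (f : Polynomial (MvPolynomial (Fin n) K)) ∈ W := by
    rw [Polynomial.as_sum_support (f : Polynomial (MvPolynomial (Fin n) K))]
    refine Submodule.sum_mem _ fun k _ => ?_
    rw [MvPolynomial.as_sum ((f : Polynomial (MvPolynomial (Fin n) K)).coeff k), map_sum]
    refine Submodule.sum_mem _ fun m hm => ?_
    have hcov := isKCover_of_mem_coverIdeal_pow (f.2 k) hm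
    set x := coeff m ((f : Polynomial (MvPolynomial (Fin n) K)).coeff k)
    rw [show monomial m x = x • monomial m (1 : K) by simp [smul_monomial],
      ← Polynomial.smul_monomial]
    exact W.smul_mem x ⟨_, hmon k m hcov, rfl⟩
  obtain ⟨b, hb, hbf⟩ := hW
  rwa [← show b = f from Subtype.ext hbf]

theorem mkₐ_comp_aeval_coverGenerator_surjective {ι : Type*}
    (hbip : ∀ i j : Fin n, G.Adj i j → (i ∈ A ↔ j ∉ A))
    {P : Ideal (reesAlgebra (coverIdeal K G))} (hP : reesIrrelevantIdeal K G ≤ P)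
    (c : ι → {c : Finset (Fin n) // IsKCover G 1 (squarefreeExponent c)})
    (hc : ∀ d, coverGenerator K G d ∉ P → ∃ s, c s = d) :
    Function.Surjective ((Ideal.Quotient.mkₐ K P).comp
      (aeval (R := K) fun s => coverGenerator K G (c s))) := by
  intro x
  obtain ⟨f, rfl⟩ := Ideal.Quotient.mkₐ_surjective K P x
  rw [← AlgHom.mem_range, ← Subalgebra.mem_comap]
  refine mem_subalgebra_of_coverGenerator_mem hbip _ (fun i x => ?_) (fun d => ?_) f
  · have hmem : reesVariable K G i * x ∈ P := by
      refine P.mul_mem_right _ (hP ?_)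
      rw [reesIrrelevantIdeal_eq_span_range]
      exact Ideal.subset_span ⟨i, rfl⟩
    rw [Subalgebra.mem_comap, Ideal.Quotient.mkₐ_eq_mk, Ideal.Quotient.eq_zero_iff_mem.2 hmem]
    exact zero_mem _
  · rw [Subalgebra.mem_comap]
    by_cases hd : coverGenerator K G d ∈ P
    · rw [Ideal.Quotient.mkₐ_eq_mk, Ideal.Quotient.eq_zero_iff_mem.2 hd]
      exact zero_mem _
    · obtain ⟨s, rfl⟩ := hc d hd
      refine ⟨X s, ?_⟩
      change Ideal.Quotient.mkₐ K P (aeval (R := K) (fun s => coverGenerator K G (c s)) (X s)) = _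
      rw [aeval_X]

/-- If each vertex lies on an edge met exactly once by all the covers `c s`, then a monomial in
the `x^(c s) t` is determined by its `t`-degree and its exponents on one side. -/
theorem aeval_coverGenerator_monomial_eq {ι : Type*} [Fintype ι]
    (hbip : ∀ i j : Fin n, G.Adj i j → (i ∈ A ↔ j ∉ A))
    (c : ι → {c : Finset (Fin n) // IsKCover G 1 (squarefreeExponent c)})
    (htight : ∀ i, ∃ j, G.Adj i j ∧ ∀ s, i ∈ (c s).1 ↔ j ∉ (c s).1)
    {m m' : ι →₀ ℕ} (hdeg : ∑ s, m s = ∑ s, m' s)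
    (hA : ∀ i ∈ A, ∑ s, m s * squarefreeExponent (c s).1 i =
      ∑ s, m' s * squarefreeExponent (c s).1 i) :
    aeval (R := K) (fun s => coverGenerator K G (c s)) (monomial m 1) =
      aeval (R := K) (fun s => coverGenerator K G (c s)) (monomial m' 1) := by
  classical
  have hall : ∑ s, m s • squarefreeExponent (c s).1 =
      ∑ s, m' s • squarefreeExponent (c s).1 := by
    ext i
    simp only [Finsupp.finsetSum_apply, Finsupp.smul_apply, smul_eq_mul]
    by_cases hi : i ∈ A
    · exact hA i hi
    · obtain ⟨j, hij, hj⟩ := htight i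
      have hjA : j ∈ A := by
        by_contra hjA
        exact hi ((hbip _ _ hij).2 hjA)
      have hsum : ∀ l : ι →₀ ℕ, ∑ s, l s * squarefreeExponent (c s).1 i +
          ∑ s, l s * squarefreeExponent (c s).1 j = ∑ s, l s := by
        intro l
        rw [← Finset.sum_add_distrib]
        refine Finset.sum_congr rfl fun s _ => ?_
        simp only [squarefreeExponent_apply, hj s]
        split_ifs <;> simp
      have := hsum m
      have := hsum m'
      have := hA j hjA
      omega
  refine Subtype.ext ?_
  rw [coe_aeval_coverGenerator_monomial, coe_aeval_coverGenerator_monomial, hdeg, hall]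

theorem ringKrullDim_quotient_le_gdim
    (hbip : ∀ i j : Fin n, G.Adj i j → (i ∈ A ↔ j ∉ A))
    (hiso : ∀ v : Fin n, ∃ w, G.Adj v w) {P : Ideal (reesAlgebra (coverIdeal K G))}
    [P.IsPrime] (hP : reesIrrelevantIdeal K G ≤ P) :
    ringKrullDim (reesAlgebra (coverIdeal K G) ⧸ P) ≤ (gdim G : WithBot ℕ∞) := by
  classical
  obtain ⟨ι, _, c, hcP, hPc⟩ : ∃ (ι : Type) (_ : Fintype ι)
      (c : ι → {c : Finset (Fin n) // IsKCover G 1 (squarefreeExponent c)}),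
      (∀ s, coverGenerator K G (c s) ∉ P) ∧
        ∀ d, coverGenerator K G d ∉ P → ∃ s, c s = d :=
    ⟨{c // coverGenerator K G c ∉ P}, Fintype.ofFinite _, Subtype.val, Subtype.prop,
      fun d hd => ⟨⟨d, hd⟩, rfl⟩⟩
  have htight : ∀ i, ∃ j, G.Adj i j ∧ ∀ s, i ∈ (c s).1 ↔ j ∉ (c s).1 := fun i => by
    obtain ⟨j, hij, hj⟩ := exists_adj_forall_coverGenerator_notMem hbip hiso hP i
    exact ⟨j, hij, fun s => hj _ (hcP s)⟩
  obtain ⟨r, a, b, hab, ha⟩ := exists_isFreeParameterPair_of_tight hbip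
    (fun s => (c s).1) (fun s => isKCover_one_squarefreeExponent.1 (c s).2) htight
  let u : ι → Option (Fin r) →₀ ℕ := fun s => Finsupp.equivFunOnFinite.symm
    fun o => o.elim 1 fun p => squarefreeExponent (c s).1 (a p)
  let e : (ι →₀ ℕ) → Option (Fin r) →₀ ℕ := fun m => ∑ s, m s • u s
  have hθ : ∀ m, aeval (R := K) (fun s => monomial (u s) (1 : K)) (monomial m 1) =
      monomial (e m) 1 := by
    intro m
    simp only [e]
    rw [aeval_monomial, map_one, one_mul, Finsupp.prod_fintype _ _ (by simp), monomial_sum_one]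
    simp [monomial_pow]
  have hΨ : ∀ m m', e m = e m' →
      aeval (R := K) (fun s => coverGenerator K G (c s)) (monomial m 1) =
        aeval (R := K) (fun s => coverGenerator K G (c s)) (monomial m' 1) := by
    intro m m' hee
    refine aeval_coverGenerator_monomial_eq hbip c htight ?_ fun i hi => ?_
    · simpa [e, u, Finsupp.finsetSum_apply] using DFunLike.congr_fun hee none
    · obtain ⟨p, hp⟩ := ha i hi
      have hsq : ∀ s, squarefreeExponent (c s).1 i = squarefreeExponent (c s).1 (a p) :=
        fun s => by simp only [squarefreeExponent_apply, hp s]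
      simp only [hsq]
      simpa [e, u, Finsupp.finsetSum_apply] using DFunLike.congr_fun hee (some p)
  have hker := ker_le_ker_of_monomial (D := reesAlgebra (coverIdeal K G) ⧸ P) _
    ((Ideal.Quotient.mkₐ K P).comp (aeval (R := K) fun s => coverGenerator K G (c s))) e hθ
    fun m m' h => congrArg (Ideal.Quotient.mkₐ K P) (hΨ m m' h)
  refine (ringKrullDim_le_card_of_ker_le (D := reesAlgebra (coverIdeal K G) ⧸ P) _ _
    (mkₐ_comp_aeval_coverGenerator_surjective hbip hP c hPc) hker).trans ?_
  have hr : r ≤ sSup {r : ℕ | HasFreeParameterSet G r} :=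
    le_csSup (bddAbove_hasFreeParameterSet G) ⟨a, b, hab⟩
  have : Fintype.card (Option (Fin r)) ≤ gdim G := by simpa [gdim] using hr
  exact_mod_cast this

end Bounds

/-- Let `G` be a bipartite graph and `K` a field. The analytic spread of
the cover ideal — the Krull dimension of the ordinary fiber cone of `J(G)` — equals the
graphical dimension of `G`. -/
theorem analyticSpread_coverIdeal_eq_gdim (K : Type*) [Field K] {n : ℕ}
    (G : SimpleGraph (Fin n))
    (A : Finset (Fin n))
    (hbip : ∀ i j : Fin n, G.Adj i j → (i ∈ A ↔ j ∉ A))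
    (hiso : ∀ v : Fin n, ∃ w, G.Adj v w) :
    ringKrullDim (ordinaryFiberCone K G) = (gdim G : WithBot (WithTop ℕ)) := by
  refine le_antisymm ?_ ?_
  · exact ringKrullDim_quotient_le_of_forall_prime _ _ fun P _ hP =>
      ringKrullDim_quotient_le_gdim hbip hiso hP
  · exact le_ringKrullDim_ordinaryFiberCone K hbip hiso
      (Nat.sSup_mem ⟨0, hasFreeParameterSet_zero G⟩ (bddAbove_hasFreeParameterSet G))
end

section
/- Let G be a graph and let A₀, B₀ be disjoint nonempty subsets of the vertex set such that for every a∈A₀ and b∈B₀ the pair {a,b} is an edge of G and moreover a right edge of G. Then for every k≥1, every basic k-cover α of G is constant on A₀ and constant on B₀. -/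
/-- A `k`-cover of a graph `G`. -/
def IsCover {n : ℕ} (G : SimpleGraph (Fin n)) (k : ℕ) (α : Fin n → ℕ) : Prop :=
  ∀ ⦃i j : Fin n⦄, G.Adj i j → k ≤ α i + α j

/-- A basic `k`-cover. -/
def IsBasicCover {n : ℕ} (G : SimpleGraph (Fin n)) (k : ℕ) (α : Fin n → ℕ) : Prop :=
  IsCover G k α ∧ ∀ β : Fin n → ℕ, β ≤ α → IsCover G k β → β = α

/-- `{i,j}` is a right edge of `G`: it is an edge, and whenever `{i,i'}` and `{j,j'}` are
edges, so is `{i',j'}`. -/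
def IsRightEdge {n : ℕ} (G : SimpleGraph (Fin n)) (i j : Fin n) : Prop :=
  G.Adj i j ∧ ∀ i' j' : Fin n, G.Adj i i' → G.Adj j j' → G.Adj i' j'

/-- In a basic `k`-cover every vertex of positive value lies on an edge of total value `k`. -/
theorem IsBasicCover.exists_adj_add_eq {n : ℕ} {G : SimpleGraph (Fin n)} {k : ℕ}
    {α : Fin n → ℕ} (hα : IsBasicCover G k α) {i : Fin n} (hi : 0 < α i) :
    ∃ j, G.Adj i j ∧ α i + α j = k := by
  by_contra! hne
  have hlt : ∀ j, G.Adj i j → k < α i + α j := fun j hj =>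
    lt_of_le_of_ne (hα.1 hj) (hne j hj).symm
  have heq : Function.update α i (α i - 1) = α := by
    refine hα.2 _ (update_le_self_iff.2 (Nat.sub_le _ _)) fun x y hxy => ?_
    have hcover := hα.1 hxy
    by_cases hx : x = i
    · subst hx
      have := hlt y hxy
      rw [Function.update_self, Function.update_of_ne hxy.ne']
      omega
    · by_cases hy : y = i
      · subst hy
        have := hlt x hxy.symm
        rw [Function.update_self, Function.update_of_ne hx]
        omega
      · rwa [Function.update_of_ne hx, Function.update_of_ne hy]
  have := congrFun heq i
  rw [Function.update_self] at this
  omega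

/-- A basic `k`-cover has total value exactly `k` on every right edge. -/
theorem IsBasicCover.add_eq_of_isRightEdge {n : ℕ} {G : SimpleGraph (Fin n)} {k : ℕ}
    {α : Fin n → ℕ} (hα : IsBasicCover G k α) {i j : Fin n} (hij : IsRightEdge G i j) :
    α i + α j = k := by
  have hle := hα.1 hij.1
  rcases Nat.eq_zero_or_pos (α i) with hi | hi
  · rcases Nat.eq_zero_or_pos (α j) with hj | hj
    · omega
    · obtain ⟨j', -, hj'⟩ := hα.exists_adj_add_eq hj
      omega
  · obtain ⟨i', hii', hi'⟩ := hα.exists_adj_add_eq hi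
    rcases Nat.eq_zero_or_pos (α j) with hj | hj
    · omega
    · obtain ⟨j', hjj', hj'⟩ := hα.exists_adj_add_eq hj
      have := hα.1 (hij.2 i' j' hii' hjj')
      omega

/-- Let `A₀`, `B₀` be disjoint nonempty vertex sets such that every pair
`{a,b}` with `a ∈ A₀`, `b ∈ B₀` is a right edge of `G`.  Then for every `k ≥ 1`, every basic
`k`-cover of `G` is constant on `A₀` and constant on `B₀`. -/
theorem basicCover_const_on_rightComplete {n : ℕ} (G : SimpleGraph (Fin n))
    (A₀ B₀ : Finset (Fin n)) (hdisj : Disjoint A₀ B₀)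
    (hA : A₀.Nonempty) (hB : B₀.Nonempty)
    (hright : ∀ a ∈ A₀, ∀ b ∈ B₀, IsRightEdge G a b) :
    ∀ k : ℕ, 1 ≤ k → ∀ α : Fin n → ℕ, IsBasicCover G k α →
      (∀ a ∈ A₀, ∀ a' ∈ A₀, α a = α a') ∧ (∀ b ∈ B₀, ∀ b' ∈ B₀, α b = α b') := by
  intro k _ α hα
  obtain ⟨a₀, ha₀⟩ := hA
  obtain ⟨b₀, hb₀⟩ := hB
  have hsum : ∀ a ∈ A₀, ∀ b ∈ B₀, α a + α b = k := fun a ha b hb =>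
    hα.add_eq_of_isRightEdge (hright a ha b hb)
  exact ⟨fun a ha a' ha' => Nat.add_right_cancel
      ((hsum a ha b₀ hb₀).trans (hsum a' ha' b₀ hb₀).symm),
    fun b hb b' hb' => Nat.add_left_cancel
      ((hsum a₀ ha₀ b hb).trans (hsum a₀ ha₀ b' hb').symm)⟩
end

section
/- Let G be a bipartite graph with bipartition V=A∪B, |A|≤|B|, such that the rank of the poset P(G) of basic 1-covers equals |A|. If P(G) is pure (all maximal chains have the same length), then P(G) is locally upper semimodular: whenever two elements α and β of P(G) both cover an element γ and α,β ≤ δ for some δ∈P(G), there exists ε∈P(G) with ε≤δ which covers both α and β. -/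
/-- The partial order on basic 1-covers of a bipartite graph with parts `A` and `Aᶜ`. -/
def pLe {n : ℕ} (A : Finset (Fin n)) (α β : Fin n → ℕ) : Prop :=
  ∀ a ∈ A, α a ≤ β a

/-- The strict order on `P(G)`. -/
def pLt {n : ℕ} (A : Finset (Fin n)) (α β : Fin n → ℕ) : Prop :=
  pLe A α β ∧ ¬ pLe A β α

/-- `β` covers `α` in the poset `P(G)` of basic 1-covers. -/
def PCovBy {n : ℕ} (G : SimpleGraph (Fin n)) (A : Finset (Fin n)) (α β : Fin n → ℕ) : Prop :=
  pLt A α β ∧ ∀ γ : Fin n → ℕ, IsBasicCover G 1 γ → ¬ (pLt A α γ ∧ pLt A γ β)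

/-- A strict `d`-step chain of basic 1-covers in `P(G)`. -/
def IsPChain {n : ℕ} (G : SimpleGraph (Fin n)) (A : Finset (Fin n)) (d : ℕ)
    (c : Fin (d + 1) → (Fin n → ℕ)) : Prop :=
  (∀ i, IsBasicCover G 1 (c i)) ∧ ∀ i : Fin d, pLt A (c i.castSucc) (c i.succ)

/-- The rank of the poset `P(G)`: the maximal number of covering steps in a chain. -/
noncomputable def posetRank {n : ℕ} (G : SimpleGraph (Fin n)) (A : Finset (Fin n)) : ℕ :=
  sSup {d : ℕ | ∃ c : Fin (d + 1) → (Fin n → ℕ), IsPChain G A d c}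

/-- A maximal chain in `P(G)`: a saturated chain which cannot be extended at either end. -/
def IsMaximalPChain {n : ℕ} (G : SimpleGraph (Fin n)) (A : Finset (Fin n)) (d : ℕ)
    (c : Fin (d + 1) → (Fin n → ℕ)) : Prop :=
  (∀ i, IsBasicCover G 1 (c i)) ∧
  (∀ i : Fin d, PCovBy G A (c i.castSucc) (c i.succ)) ∧
  (∀ γ : Fin n → ℕ, IsBasicCover G 1 γ → ¬ pLt A γ (c 0)) ∧
  (∀ γ : Fin n → ℕ, IsBasicCover G 1 γ → ¬ pLt A (c (Fin.last d)) γ)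

/-- `P(G)` is pure: all maximal chains have the same length (the rank). -/
def PosetIsPure {n : ℕ} (G : SimpleGraph (Fin n)) (A : Finset (Fin n)) : Prop :=
  ∀ d : ℕ, ∀ c : Fin (d + 1) → (Fin n → ℕ), IsMaximalPChain G A d c → d = posetRank G A

/-- The number of vertices of `A` used by a 1-cover, counted with multiplicity. -/
def coverWeight {n : ℕ} (A : Finset (Fin n)) (α : Fin n → ℕ) : ℕ :=
  ∑ a ∈ A, α a

lemma coverWeight_mono {n : ℕ} {A : Finset (Fin n)} {α β : Fin n → ℕ} (h : pLe A α β) :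
    coverWeight A α ≤ coverWeight A β :=
  Finset.sum_le_sum h

lemma coverWeight_strictMono {n : ℕ} {A : Finset (Fin n)} {α β : Fin n → ℕ} (h : pLt A α β) :
    coverWeight A α < coverWeight A β := by
  obtain ⟨hle, hnot⟩ := h
  simp only [pLe, not_forall, not_le] at hnot
  obtain ⟨a, ha, hlt⟩ := hnot
  exact Finset.sum_lt_sum hle ⟨a, ha, hlt⟩

lemma IsBasicCover.le_one {n : ℕ} {G : SimpleGraph (Fin n)} {α : Fin n → ℕ}
    (hα : IsBasicCover G 1 α) (v : Fin n) : α v ≤ 1 := by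
  have h := hα.2 (fun v => min (α v) 1) (fun v => min_le_left _ _) (fun i j hij => by
    have := hα.1 hij
    dsimp only
    omega)
  have : min (α v) 1 = α v := congrFun h v
  omega

lemma IsBasicCover.coverWeight_le_card {n : ℕ} {G : SimpleGraph (Fin n)} {A : Finset (Fin n)}
    {α : Fin n → ℕ} (hα : IsBasicCover G 1 α) : coverWeight A α ≤ A.card := by
  simpa [coverWeight] using Finset.sum_le_card_nsmul A α 1 (fun a _ => hα.le_one a)

/-- A vertex of positive value in a basic 1-cover has a neighbour of value zero. -/
lemma IsBasicCover.exists_adj_eq_zero {n : ℕ} {G : SimpleGraph (Fin n)} {α : Fin n → ℕ}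
    (hα : IsBasicCover G 1 α) {v : Fin n} (hv : α v ≠ 0) : ∃ w, G.Adj v w ∧ α w = 0 := by
  by_contra! hcon
  have h := hα.2 (Function.update α v 0)
    (update_le_iff.2 ⟨Nat.zero_le _, fun _ _ => le_rfl⟩) (fun i j hij => by
      have hcov := hα.1 hij
      have hne := hij.ne
      by_cases hi : i = v
      · subst hi
        have := hcon j hij
        rw [Function.update_of_ne hne.symm]
        omega
      · by_cases hj : j = v
        · subst hj
          have := hcon i hij.symm
          rw [Function.update_of_ne hi]
          omega
        · rwa [Function.update_of_ne hi, Function.update_of_ne hj])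
  exact hv (by simpa using (congrFun h v).symm)

/-- A basic 1-cover of a bipartite graph is determined by its values on `A`. -/
lemma IsBasicCover.eq_of_eqOn {n : ℕ} {G : SimpleGraph (Fin n)} {A : Finset (Fin n)}
    (hbip : ∀ i j : Fin n, G.Adj i j → (i ∈ A ↔ j ∉ A)) {α β : Fin n → ℕ}
    (hα : IsBasicCover G 1 α) (hβ : IsBasicCover G 1 β) (h : ∀ a ∈ A, α a = β a) : α = β := by
  have hcov : IsCover G 1 (fun v => min (α v) (β v)) := fun i j hij => by
    have h₁ := hα.1 hij
    have h₂ := hβ.1 hij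
    have h₃ := hbip i j hij
    by_cases hi : i ∈ A
    · have := h i hi
      dsimp only
      omega
    · have := h j (by tauto)
      dsimp only
      omega
  exact (hα.2 _ (fun v => min_le_left _ _) hcov).symm.trans
    (hβ.2 _ (fun v => min_le_right _ _) hcov)

/-- Basic 1-covers of a bipartite graph have joins, given on `A` by the pointwise maximum. -/
lemma IsBasicCover.exists_sup {n : ℕ} {G : SimpleGraph (Fin n)} {A : Finset (Fin n)}
    (hbip : ∀ i j : Fin n, G.Adj i j → (i ∈ A ↔ j ∉ A)) {α β : Fin n → ℕ}
    (hα : IsBasicCover G 1 α) (hβ : IsBasicCover G 1 β) :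
    ∃ ε, IsBasicCover G 1 ε ∧ ∀ a ∈ A, ε a = max (α a) (β a) := by
  classical
  let ε : Fin n → ℕ := fun v => if v ∈ A then max (α v) (β v) else
    if ∃ a, G.Adj v a ∧ max (α a) (β a) = 0 then 1 else 0
  have hεA : ∀ a ∈ A, ε a = max (α a) (β a) := fun a ha => if_pos ha
  have hεB : ∀ v ∉ A, ε v = if ∃ a, G.Adj v a ∧ max (α a) (β a) = 0 then 1 else 0 :=
    fun v hv => if_neg hv
  have hcov : ∀ i j, G.Adj i j → i ∈ A → 1 ≤ ε i + ε j := fun i j hij hi => by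
    rw [hεA i hi, hεB j ((hbip i j hij).1 hi)]
    by_cases h0 : max (α i) (β i) = 0
    · rw [if_pos ⟨i, hij.symm, h0⟩]
      omega
    · omega
  have hzero : ∀ φ : Fin n → ℕ, IsBasicCover G 1 φ → (∀ v, φ v ≤ max (α v) (β v)) →
      ∀ a ∈ A, φ a ≠ 0 → ∃ b, G.Adj a b ∧ ε b = 0 := fun φ hφ hle a ha h0 => by
    obtain ⟨b, hab, hb⟩ := hφ.exists_adj_eq_zero h0
    refine ⟨b, hab, ?_⟩
    rw [hεB b ((hbip a b hab).1 ha), if_neg]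
    rintro ⟨c, hbc, hc⟩
    have := hφ.1 hbc
    have := hle c
    omega
  refine ⟨ε, ⟨fun i j hij => ?_, fun ζ hζ hζcov => ?_⟩, hεA⟩
  · by_cases hi : i ∈ A
    · exact hcov i j hij hi
    · have := hcov j i hij.symm (by have := hbip i j hij; tauto)
      omega
  · funext v
    refine le_antisymm (hζ v) ?_
    by_cases hv : v ∈ A
    · by_cases h0 : ε v = 0
      · omega
      · obtain ⟨b, hvb, hb⟩ : ∃ b, G.Adj v b ∧ ε b = 0 := by
          rw [hεA v hv] at h0
          by_cases hαv : α v = 0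
          · exact hzero β hβ (fun _ => le_max_right _ _) v hv (by omega)
          · exact hzero α hα (fun _ => le_max_left _ _) v hv hαv
        have h₁ : ζ b ≤ ε b := hζ b
        have h₂ := hζcov hvb
        have h₃ := hεA v hv
        have h₄ := hα.le_one v
        have h₅ := hβ.le_one v
        omega
    · rw [hεB v hv]
      split_ifs with h
      · obtain ⟨a, hva, ha⟩ := h
        have h₁ : ζ a ≤ ε a := hζ a
        have h₂ := hζcov hva
        rw [hεA a (by have := hbip v a hva; tauto)] at h₁
        omega
      · exact Nat.zero_le _

lemma exists_pCovBy_above {n : ℕ} {G : SimpleGraph (Fin n)} {A : Finset (Fin n)}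
    {α γ : Fin n → ℕ} (hγ : IsBasicCover G 1 γ) (h : pLt A α γ) :
    ∃ β, IsBasicCover G 1 β ∧ PCovBy G A α β := by
  obtain ⟨β, ⟨hβ, hlt⟩, hmin⟩ := WellFounded.has_min (measure (coverWeight A)).wf
    {β | IsBasicCover G 1 β ∧ pLt A α β} ⟨γ, hγ, h⟩
  exact ⟨β, hβ, hlt, fun ζ hζ hcon =>
    hmin ζ ⟨hζ, hcon.1⟩ (coverWeight_strictMono hcon.2)⟩

lemma exists_pCovBy_below {n : ℕ} {G : SimpleGraph (Fin n)} {A : Finset (Fin n)}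
    {α γ : Fin n → ℕ} (hγ : IsBasicCover G 1 γ) (h : pLt A γ α) :
    ∃ β, IsBasicCover G 1 β ∧ PCovBy G A β α := by
  obtain ⟨β, ⟨hβ, hlt⟩, hmin⟩ :=
    WellFounded.has_min (measure fun β => A.card - coverWeight A β).wf
    {β | IsBasicCover G 1 β ∧ pLt A β α} ⟨γ, hγ, h⟩
  refine ⟨β, hβ, hlt, fun ζ hζ hcon => hmin ζ ⟨hζ, hcon.2⟩ ?_⟩
  have h₁ := coverWeight_strictMono hcon.1
  have h₂ := hζ.coverWeight_le_card (A := A)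
  change A.card - coverWeight A ζ < A.card - coverWeight A β
  omega

/-- If all maximal chains of `P(G)` have length `|A|`, then each covering step adds at most one
vertex of `A`. -/
lemma PosetIsPure.coverWeight_le_succ {n : ℕ} {G : SimpleGraph (Fin n)} {A : Finset (Fin n)}
    (hrank : posetRank G A = A.card) (hpure : PosetIsPure G A) {γ α : Fin n → ℕ}
    (hγ : IsBasicCover G 1 γ) (hα : IsBasicCover G 1 α) (hcov : PCovBy G A γ α) :
    coverWeight A α ≤ coverWeight A γ + 1 := by
  by_contra! hgap
  let Q : ℕ → Prop := fun d => ∃ c : Fin (d + 1) → (Fin n → ℕ),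
    (∀ i, IsBasicCover G 1 (c i)) ∧ (∀ i : Fin d, PCovBy G A (c i.castSucc) (c i.succ)) ∧
    d + 1 + coverWeight A (c 0) ≤ coverWeight A (c (Fin.last d))
  have hQ1 : Q 1 := by
    refine ⟨![γ, α], ?_, ?_, ?_⟩
    · intro i
      fin_cases i
      · exact hγ
      · exact hα
    · intro i
      fin_cases i
      exact hcov
    · change 1 + 1 + coverWeight A γ ≤ coverWeight A α
      omega
  have hbound : ∀ d, Q d → d < A.card := by
    rintro d ⟨c, hc, -, hw⟩
    have := (hc (Fin.last d)).coverWeight_le_card (A := A)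
    omega
  obtain ⟨d, ⟨c, hc, hsat, hw⟩, hmax⟩ : ∃ d, Q d ∧ ¬ Q (d + 1) := by
    by_contra! hcon
    have hall : ∀ k, Q (1 + k) := fun k => by
      induction k with
      | zero => exact hQ1
      | succ k ih => exact hcon _ ih
    have := hbound _ (hall A.card)
    omega
  have hlen := hpure d c ⟨hc, hsat, fun ζ hζ hlt => ?_, fun ζ hζ hlt => ?_⟩
  · have := hbound d ⟨c, hc, hsat, hw⟩
    omega
  · obtain ⟨η, hη, hηc⟩ := exists_pCovBy_below hζ hlt
    refine hmax ⟨Fin.cons η c, fun i => ?_, fun i => ?_, ?_⟩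
    · cases i using Fin.cases with
      | zero => exact hη
      | succ i => exact hc i
    · cases i using Fin.cases with
      | zero => exact hηc
      | succ i => exact hsat i
    · have := coverWeight_strictMono hηc.1
      rw [← Fin.succ_last, Fin.cons_succ, Fin.cons_zero]
      omega
  · obtain ⟨η, hη, hcη⟩ := exists_pCovBy_above hζ hlt
    refine hmax ⟨Fin.snoc (α := fun _ => Fin n → ℕ) c η, fun i => ?_, fun i => ?_, ?_⟩
    · cases i using Fin.lastCases with
      | last => simpa using hη
      | cast i => simpa using hc i
    · cases i using Fin.lastCases with
      | last => simpa using hcη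
      | cast i =>
        rw [Fin.succ_castSucc, Fin.snoc_castSucc, Fin.snoc_castSucc]
        exact hsat i
    · have := coverWeight_strictMono hcη.1
      rw [Fin.snoc_last, ← Fin.castSucc_zero, Fin.snoc_castSucc]
      omega

/-- In a pure `P(G)` of rank `|A|`, the join of two distinct upper covers of an element covers
each of them. -/
lemma PosetIsPure.pCovBy_sup {n : ℕ} {G : SimpleGraph (Fin n)} {A : Finset (Fin n)}
    (hbip : ∀ i j : Fin n, G.Adj i j → (i ∈ A ↔ j ∉ A))
    (hrank : posetRank G A = A.card) (hpure : PosetIsPure G A) {α β γ ε : Fin n → ℕ}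
    (hα : IsBasicCover G 1 α) (hβ : IsBasicCover G 1 β) (hγ : IsBasicCover G 1 γ)
    (hne : α ≠ β) (hγα : PCovBy G A γ α) (hγβ : PCovBy G A γ β)
    (hεA : ∀ a ∈ A, ε a = max (α a) (β a)) : PCovBy G A α ε := by
  refine ⟨⟨fun a ha => hεA a ha ▸ le_max_left _ _, fun hle => ?_⟩, fun ζ _ hcon => ?_⟩
  · have hβα : pLe A β α := fun a ha => (hεA a ha ▸ le_max_right _ _ : β a ≤ ε a).trans (hle a ha)
    by_cases hαβ : pLe A α β
    · exact hne (hα.eq_of_eqOn hbip hβ fun a ha => le_antisymm (hαβ a ha) (hβα a ha))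
    · exact hγα.2 β hβ ⟨hγβ.1, hβα, hαβ⟩
  · have h₁ := coverWeight_strictMono hcon.1
    have h₂ := coverWeight_strictMono hcon.2
    have h₃ := hpure.coverWeight_le_succ hrank hγ hβ hγβ
    have h₄ : coverWeight A ε + coverWeight A γ ≤ coverWeight A α + coverWeight A β := by
      simp only [coverWeight, ← Finset.sum_add_distrib]
      refine Finset.sum_le_sum fun a ha => ?_
      have := hεA a ha
      have := hγα.1.1 a ha
      have := hγβ.1.1 a ha
      omega
    omega

/-- Let `G` be bipartite with bipartition `A ∪ Aᶜ`, `|A| ≤ |Aᶜ|`, such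
that the rank of `P(G)` equals `|A|`.  If `P(G)` is pure, then `P(G)` is locally upper
semimodular: whenever distinct `α`, `β` cover `γ` and `α, β < δ` in `P(G)`, there is
`ε ≤ δ` in `P(G)` covering both `α` and `β`. -/
theorem pure_implies_locally_upper_semimodular {n : ℕ} (G : SimpleGraph (Fin n))
    (A : Finset (Fin n))
    (hbip : ∀ i j : Fin n, G.Adj i j → (i ∈ A ↔ j ∉ A))
    (hcard : A.card ≤ Aᶜ.card)
    (hiso : ∀ v : Fin n, ∃ w, G.Adj v w)
    (hrank : posetRank G A = A.card)
    (hpure : PosetIsPure G A) :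
    ∀ α β γ δ : Fin n → ℕ, IsBasicCover G 1 α → IsBasicCover G 1 β →
      IsBasicCover G 1 γ → IsBasicCover G 1 δ → α ≠ β →
      PCovBy G A γ α → PCovBy G A γ β → pLt A α δ → pLt A β δ →
      ∃ ε : Fin n → ℕ, IsBasicCover G 1 ε ∧ pLe A ε δ ∧ PCovBy G A α ε ∧ PCovBy G A β ε := by
  intro α β γ δ hα hβ hγ hδ hne hγα hγβ hαδ hβδ
  obtain ⟨ε, hε, hεA⟩ := hα.exists_sup hbip hβ
  refine ⟨ε, hε, fun a ha => hεA a ha ▸ max_le (hαδ.1 a ha) (hβδ.1 a ha), ?_, ?_⟩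
  · exact hpure.pCovBy_sup hbip hrank hα hβ hγ hne hγα hγβ hεA
  · exact hpure.pCovBy_sup hbip hrank hβ hα hγ hne.symm hγβ hγα
      fun a ha => (hεA a ha).trans (max_comm _ _)
end
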